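/- arXiv:2605.10233 — 4 statements merged into one kernel-verified Lean document; each statement's English description precedes it below -/
import Mathlib

section
/- If n > 2m, then w(n, m) < 1; that is, under mutual random play the Faithful's winning probability is strictly positive whenever the Traitors have not yet reached parity. -/
/-- The Migdał win-probability function: the Traitor win probability under
mutual random play in the Traitors game with `n` players, `m` of whom are Traitors. -/
def migdalW (n m : ℕ) : ℚ :=
  if m = 0 then 0
  else if _h : n ≤ 2 * m then 1
  else ((n : ℚ) - (m : ℚ)) / (n : ℚ) * migdalW (n - 2) m
      + (m : ℚ) / (n : ℚ) * migdalW (n - 2) (m - 1)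
termination_by n
decreasing_by all_goals omega

/-! In a non-terminal position `w(n, m)` is a convex combination of `w(n - 2, m)`, which is at most
`1`, and `w(n - 2, m - 1)`, whose weight `m / n` is positive. Banishing a Traitor keeps the Faithful
in the majority, `2 * (m - 1) < n - 2`, so by induction the second value is strictly below `1`. -/

theorem combo_lt_of_le_of_lt {R : Type*} [Semiring R] [PartialOrder R] [IsStrictOrderedRing R]
    {a b x y c : R} (ha : 0 ≤ a) (hb : 0 < b) (hab : a + b = 1) (hx : x ≤ c) (hy : y < c) :
    a * x + b * y < c :=
  calc a * x + b * y
    _ < a * c + b * c :=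
        add_lt_add_of_le_of_lt (mul_le_mul_of_nonneg_left hx ha) (mul_lt_mul_of_pos_left hy hb)
    _ = c := by rw [← add_mul, hab, one_mul]

theorem natCast_sub_div_nonneg {K : Type*} [Field K] [LinearOrder K] [IsStrictOrderedRing K]
    {n m : ℕ} (hmn : m ≤ n) : 0 ≤ ((n : K) - m) / n :=
  div_nonneg (sub_nonneg.2 (Nat.cast_le.2 hmn)) n.cast_nonneg

theorem sub_div_add_div_eq_one {K : Type*} [DivisionRing K] {b : K} (a : K) (hb : b ≠ 0) :
    (b - a) / b + a / b = 1 := by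
  rw [← add_div, sub_add_cancel, div_self hb]

theorem migdalW_le_one (n m : ℕ) : migdalW n m ≤ 1 := by
  fun_induction migdalW n m with
  | case1 => exact zero_le_one
  | case2 => exact le_rfl
  | case3 n m _ _ le_one_faithful le_one_traitor =>
    have n_ne_zero : (n : ℚ) ≠ 0 := Nat.cast_ne_zero.2 (by lia)
    have faithful_weight_nonneg : 0 ≤ ((n : ℚ) - m) / n := natCast_sub_div_nonneg (by lia)
    have traitor_weight_nonneg : (0 : ℚ) ≤ m / n := by positivity
    exact convex_Iic (1 : ℚ) (Set.mem_Iic.2 le_one_faithful) (Set.mem_Iic.2 le_one_traitor)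
      faithful_weight_nonneg traitor_weight_nonneg (sub_div_add_div_eq_one _ n_ne_zero)

theorem migdalW_lt_one (n m : ℕ) (h : 2 * m < n) : migdalW n m < 1 := by
  fun_induction migdalW n m with
  | case1 => exact zero_lt_one
  | case2 n m _ parity => exact absurd parity h.not_ge
  | case3 n m m_ne_zero _ _ lt_one_traitor =>
    have n_pos : (0 : ℚ) < n := Nat.cast_pos.2 (by lia)
    have faithful_weight_nonneg : 0 ≤ ((n : ℚ) - m) / n := natCast_sub_div_nonneg (by lia)
    have traitor_weight_pos : (0 : ℚ) < m / n := by positivity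
    exact combo_lt_of_le_of_lt faithful_weight_nonneg traitor_weight_pos
      (sub_div_add_div_eq_one _ n_pos.ne') (migdalW_le_one (n - 2) m) (lt_one_traitor (by lia))
end

section
/- Let n ≥ 3 and let v : ZMod n → ZMod n be a vote profile in which exactly one player i₀ deviates from Vote-Left: v(i) = i + 1 for all i ≠ i₀, while v(i₀) ≠ i₀ + 1 and v(i₀) ≠ i₀. Then the deviation is identifiable from the public vote counts: player i₀ + 1 receives 0 votes and the deviator's target v(i₀) receives exactly 2 votes, so the vote-count function is not constantly 1. -/
section SingleDeviation

variable {α β : Type*} {f v : α → β} {a : α}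

theorem apply_ne_of_eqOn_compl_singleton (hf : f.Injective) (hv : Set.EqOn v f {a}ᶜ)
    (ha : v a ≠ f a) (i : α) : v i ≠ f a := by
  rcases eq_or_ne i a with rfl | hi
  · exact ha
  · rw [hv hi]
    exact hf.ne hi

theorem apply_eq_apply_iff_of_eqOn_compl_singleton (hf : f.Injective)
    (hv : Set.EqOn v f {a}ᶜ) {b : α} (hb : f b = v a) (i : α) :
    v i = v a ↔ i = a ∨ i = b := by
  rcases eq_or_ne i a with rfl | hi
  · simp
  · rw [hv hi, ← hb, hf.eq_iff, or_iff_right hi]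

theorem voteLeft_deviation_detectable_general [Fintype α] [DecidableEq β]
    (hf : f.Injective) (hv : Set.EqOn v f {a}ᶜ) (ha : v a ≠ f a)
    (htarget : v a ∈ Set.range f) :
    (Finset.univ.filter fun i => v i = f a).card = 0 ∧
    (Finset.univ.filter fun i => v i = v a).card = 2 ∧
    ¬ ∀ j, (Finset.univ.filter fun i => v i = j).card = 1 := by
  classical
  obtain ⟨b, hb⟩ := htarget
  have hab : a ≠ b := by
    rintro rfl
    exact ha hb.symm
  have card_prescribed : (Finset.univ.filter fun i => v i = f a).card = 0 :=
    Finset.card_filter_eq_zero_iff.mpr fun i _ => apply_ne_of_eqOn_compl_singleton hf hv ha i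
  have fiber_target : (Finset.univ.filter fun i => v i = v a) = {a, b} := by
    ext i
    simp [apply_eq_apply_iff_of_eqOn_compl_singleton hf hv hb i]
  refine ⟨card_prescribed, ?_, fun hone => ?_⟩
  · rw [fiber_target, Finset.card_pair hab]
  · exact zero_ne_one (card_prescribed.symm.trans (hone (f a)))

end SingleDeviation

/-- If exactly one player `i₀` deviates from Vote-Left (voting for neither `i₀ + 1`
nor themself), the deviation is identifiable from the public vote counts:
player `i₀ + 1` receives no votes, the deviator's target receives exactly two votes,
and the vote-count function is not constantly `1`. -/
theorem voteLeft_deviation_detectable (n : ℕ) [NeZero n] (hn : 3 ≤ n)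
    (v : ZMod n → ZMod n) (i₀ : ZMod n)
    (hcomply : ∀ i : ZMod n, i ≠ i₀ → v i = i + 1)
    (hdev : v i₀ ≠ i₀ + 1) (hself : v i₀ ≠ i₀) :
    (Finset.univ.filter fun i : ZMod n => v i = i₀ + 1).card = 0 ∧
    (Finset.univ.filter fun i : ZMod n => v i = v i₀).card = 2 ∧
    ¬ ∀ j : ZMod n, (Finset.univ.filter fun i : ZMod n => v i = j).card = 1 :=
  voteLeft_deviation_detectable_general (add_left_injective 1) (fun i hi => hcomply i hi) hdev
    ⟨v i₀ - 1, sub_add_cancel (v i₀) 1⟩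
end

section
/- For all natural numbers n and m, w(n, m) ≤ w†(n, m); that is, the Traitors' win probability under Vote-Left with optimal late-game deviation is at least their win probability under mutual random play, the two recurrences differing only in that states with 2m < n ≤ 2m + 2 are absorbed into the Traitor-win region by σ†. -/
/-- The Vote-Left optimal-deviation win-probability function: the Traitor win
probability under Vote-Left when the Traitors comply while `n > 2m + 2` and
collude in the late-game phase `n ≤ 2m + 2`. -/
def wDagger (n m : ℕ) : ℚ :=
  if m = 0 then 0
  else if _h : n ≤ 2 * m + 2 then 1
  else ((n : ℚ) - (m : ℚ)) / (n : ℚ) * wDagger (n - 2) m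
      + (m : ℚ) / (n : ℚ) * wDagger (n - 2) (m - 1)
termination_by n
decreasing_by all_goals omega

/-- The expected value of `v` at the number of Traitors left after one of `n` players, `m` of
them Traitors, is banished uniformly at random. It is meaningful for `m ≤ n` and `n ≠ 0`, and is the
right-hand side of both win-probability recurrences. -/
def banishmentMean {K : Type*} [Field K] (n m : ℕ) (v : ℕ → K) : K :=
  ((n : K) - (m : K)) / (n : K) * v m + (m : K) / (n : K) * v (m - 1)

section BanishmentMean

variable {K : Type*} [Field K]

theorem banishmentMean_const {n : ℕ} (hn : (n : K) ≠ 0) (m : ℕ) (c : K) :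
    banishmentMean n m (fun _ ↦ c) = c := by
  rw [banishmentMean, ← add_mul, ← add_div, sub_add_cancel, div_self hn, one_mul]

theorem banishmentMean_mono [LinearOrder K] [IsStrictOrderedRing K] {n m : ℕ} (hmn : m ≤ n) :
    Monotone (banishmentMean n m : (ℕ → K) → K) := by
  intro u v huv
  have faithful_nonneg : 0 ≤ ((n : K) - m) / n :=
    div_nonneg (sub_nonneg.mpr (Nat.cast_le.mpr hmn)) n.cast_nonneg
  have traitor_nonneg : 0 ≤ (m : K) / n := div_nonneg m.cast_nonneg n.cast_nonneg
  exact add_le_add (mul_le_mul_of_nonneg_left (huv m) faithful_nonneg)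
    (mul_le_mul_of_nonneg_left (huv (m - 1)) traitor_nonneg)

end BanishmentMean

theorem migdalW_zero_right (n : ℕ) : migdalW n 0 = 0 := by
  rw [migdalW, if_pos rfl]

theorem migdalW_eq_one {n m : ℕ} (hm : m ≠ 0) (hn : n ≤ 2 * m) : migdalW n m = 1 := by
  rw [migdalW, if_neg hm, dif_pos hn]

theorem migdalW_eq_banishmentMean {n m : ℕ} (hm : m ≠ 0) (hn : 2 * m < n) :
    migdalW n m = banishmentMean n m (migdalW (n - 2)) := by
  rw [migdalW, if_neg hm, dif_neg hn.not_ge, banishmentMean]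

theorem wDagger_zero_right (n : ℕ) : wDagger n 0 = 0 := by
  rw [wDagger, if_pos rfl]

theorem wDagger_eq_one {n m : ℕ} (hm : m ≠ 0) (hn : n ≤ 2 * m + 2) : wDagger n m = 1 := by
  rw [wDagger, if_neg hm, dif_pos hn]

theorem wDagger_eq_banishmentMean {n m : ℕ} (hm : m ≠ 0) (hn : 2 * m + 2 < n) :
    wDagger n m = banishmentMean n m (wDagger (n - 2)) := by
  rw [wDagger, if_neg hm, dif_neg hn.not_ge, banishmentMean]

theorem migdalW_le_wDagger (n m : ℕ) : migdalW n m ≤ wDagger n m := by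
  induction n using Nat.strong_induction_on generalizing m with
  | _ n ih =>
    obtain rfl | hm := eq_or_ne m 0
    · rw [migdalW_zero_right, wDagger_zero_right]
    obtain hn | hn := le_or_gt n (2 * m + 2)
    · exact (migdalW_le_one n m).trans_eq (wDagger_eq_one hm hn).symm
    calc migdalW n m
        = banishmentMean n m (migdalW (n - 2)) := migdalW_eq_banishmentMean hm (by lia)
      _ ≤ banishmentMean n m (wDagger (n - 2)) :=
        banishmentMean_mono (by lia) (ih (n - 2) (by lia))
      _ = wDagger n m := (wDagger_eq_banishmentMean hm hn).symm
end

section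
/- If n > 2m + 2, then w†(n, m) < 1; that is, under Vote-Left with optimal Traitor deviation the Faithful retain a strictly positive winning probability from every state in the equilibrium region. -/
theorem wDagger_of_le {n m : ℕ} (hm : m ≠ 0) (h : n ≤ 2 * m + 2) : wDagger n m = 1 := by
  rw [wDagger, if_neg hm, dif_pos h]

theorem wDagger_of_lt {n m : ℕ} (h : 2 * m + 2 < n) :
    wDagger n m =
      ((n : ℚ) - m) / n * wDagger (n - 2) m + (m : ℚ) / n * wDagger (n - 2) (m - 1) := by
  rcases eq_or_ne m 0 with rfl | hm
  · simp [wDagger_zero_right]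
  · rw [wDagger, if_neg hm, dif_neg h.not_ge]

theorem one_sub_wDagger_of_lt {n m : ℕ} (h : 2 * m + 2 < n) :
    1 - wDagger n m =
      ((n : ℚ) - m) / n * (1 - wDagger (n - 2) m) +
        (m : ℚ) / n * (1 - wDagger (n - 2) (m - 1)) := by
  have hn : (n : ℚ) ≠ 0 := Nat.cast_ne_zero.mpr (Nat.ne_zero_of_lt h)
  rw [wDagger_of_lt h]
  field_simp
  ring

theorem wDagger_le_one (n m : ℕ) : wDagger n m ≤ 1 := by
  induction n using Nat.strong_induction_on generalizing m with
  | _ n ih =>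
    rcases lt_or_ge (2 * m + 2) n with h | h
    · have same_nonneg : 0 ≤ 1 - wDagger (n - 2) m :=
        sub_nonneg.mpr (ih (n - 2) (by omega) m)
      have pred_nonneg : 0 ≤ 1 - wDagger (n - 2) (m - 1) :=
        sub_nonneg.mpr (ih (n - 2) (by omega) (m - 1))
      have same_weight_nonneg : 0 ≤ ((n : ℚ) - m) / n :=
        div_nonneg (sub_nonneg.mpr (Nat.cast_le.mpr (by omega))) n.cast_nonneg
      rw [← sub_nonneg, one_sub_wDagger_of_lt h]
      exact add_nonneg (mul_nonneg same_weight_nonneg same_nonneg)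
        (mul_nonneg (by positivity) pred_nonneg)
    · rcases eq_or_ne m 0 with rfl | hm
      · exact (wDagger_zero_right n).trans_le zero_le_one
      · exact (wDagger_of_le hm h).le

theorem wDagger_lt_one (n m : ℕ) (h : 2 * m + 2 < n) : wDagger n m < 1 := by
  induction m generalizing n with
  | zero => exact (wDagger_zero_right n).trans_lt zero_lt_one
  | succ m ih =>
    have same_nonneg : 0 ≤ 1 - wDagger (n - 2) (m + 1) := sub_nonneg.mpr (wDagger_le_one _ _)
    have pred_pos : 0 < 1 - wDagger (n - 2) m := sub_pos.mpr (ih (n - 2) (by omega))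
    have same_weight_nonneg : 0 ≤ ((n : ℚ) - (m + 1 : ℕ)) / n :=
      div_nonneg (sub_nonneg.mpr (Nat.cast_le.mpr (by omega))) n.cast_nonneg
    have pred_weight_pos : 0 < ((m + 1 : ℕ) : ℚ) / n :=
      div_pos (Nat.cast_pos.mpr m.succ_pos) (Nat.cast_pos.mpr (Nat.zero_lt_of_lt h))
    rw [← sub_pos, one_sub_wDagger_of_lt h]
    exact add_pos_of_nonneg_of_pos (mul_nonneg same_weight_nonneg same_nonneg)
      (mul_pos pred_weight_pos pred_pos)
end
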